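/- Fix an integer m ≥ 3 and a ∈ ℂ^{m−1}. Every eigenvalue of H(m,a) has geometric multiplicity one: if u_1 and u_2 are both eigenfunctions of H associated with the same eigenvalue λ, then u_1 and u_2 are linearly dependent, i.e., there exists c ∈ ℂ with u_2(z) = c·u_1(z) for all z ∈ ℂ. -/

import Mathlib

open Complex Real Filter Set MeasureTheory Asymptotics

/-- The polynomial `P(z) = a₁ z^{m-1} + a₂ z^{m-2} + ⋯ + a_{m-1} z`. -/
noncomputable def Ppoly (m : ℕ) (a : ℕ → ℂ) (z : ℂ) : ℂ :=
  ∑ j ∈ Finset.Icc 1 (m - 1), a j * z ^ (m - j)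

/-- `u` is an eigenfunction of `H(m,a)` associated with the eigenvalue `lam`:
`u` is a nonconstant entire solution of `-u'' - ((iz)^m + P(iz)) u = lam u` decaying
along the rays `arg z = -π/2 ± 2π/(m+2)`. -/
def IsEigenfunction (m : ℕ) (a : ℕ → ℂ) (lam : ℂ) (u : ℂ → ℂ) : Prop :=
  Differentiable ℂ u ∧
  (¬ ∃ c : ℂ, ∀ z : ℂ, u z = c) ∧
  (∀ z : ℂ, -(deriv (deriv u) z)
      - ((Complex.I * z) ^ m + Ppoly m a (Complex.I * z)) * u z = lam * u z) ∧
  Filter.Tendsto (fun r : ℝ =>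
      u ((r : ℂ) * Complex.exp (((-(Real.pi / 2) + 2 * Real.pi / ((m : ℝ) + 2) : ℝ) : ℂ)
        * Complex.I))) Filter.atTop (nhds 0) ∧
  Filter.Tendsto (fun r : ℝ =>
      u ((r : ℂ) * Complex.exp (((-(Real.pi / 2) - 2 * Real.pi / ((m : ℝ) + 2) : ℝ) : ℂ)
        * Complex.I))) Filter.atTop (nhds 0)

/-- `lam` is an eigenvalue of `H(m,a)`. -/
def IsEigenvalue (m : ℕ) (a : ℕ → ℂ) (lam : ℂ) : Prop :=
  ∃ u : ℂ → ℂ, IsEigenfunction m a lam u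

/-!
The Wronskian of two solutions of `u'' = Q u` is constant. Along the ray `r ↦ r e` both solutions
satisfy `v'' = q v` with `q r = e² Q(r e)`, and when `Re q ≥ 0` their energy `N = ‖v‖² + ‖w‖²`
satisfies `N'' ≥ 2 (‖v'‖² + ‖w'‖²)`. If both solutions decay, a Wronskian `W ≠ 0` would force
`‖v'‖² + ‖w'‖² ≥ ‖W‖` eventually, so `N` would tend to infinity instead of zero. Hence `W = 0`
and the solutions are proportional. For `H(m,a)` and `e = exp(i(-π/2 + 2π/(m+2)))` the leading
coefficient of `q` is `(i e)^(m+2) = 1`.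
-/

section Wronskian

variable {𝕜 A : Type*} [NontriviallyNormedField 𝕜] [NormedCommRing A] [NormedAlgebra 𝕜 A]

/-- The Wronskian `f g' - f' g` of two functions of one variable. The values lie in an algebra so
that the notion covers entire functions as well as complex-valued functions of a real variable. -/
noncomputable def wronskian (f g : 𝕜 → A) (x : 𝕜) : A :=
  f x * deriv g x - deriv f x * g x

/-- `f` is a solution, on the whole line or plane, of the second-order equation `f'' = q f`. -/
structure IsSchrodingerSolution (q f : 𝕜 → A) : Prop where
  differentiable : Differentiable 𝕜 f
  hasDerivAt_deriv : ∀ x, HasDerivAt (deriv f) (q x * f x) x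

theorem IsSchrodingerSolution.hasDerivAt {q f : 𝕜 → A} (hf : IsSchrodingerSolution q f) (x : 𝕜) :
    HasDerivAt f (deriv f x) x :=
  (hf.differentiable x).hasDerivAt

theorem IsSchrodingerSolution.hasDerivAt_wronskian {q f g : 𝕜 → A}
    (hf : IsSchrodingerSolution q f) (hg : IsSchrodingerSolution q g) (x : 𝕜) :
    HasDerivAt (wronskian f g) 0 x := by
  refine (((hf.hasDerivAt x).mul (hg.hasDerivAt_deriv x)).sub
    ((hf.hasDerivAt_deriv x).mul (hg.hasDerivAt x))).congr_deriv ?_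
  ring

theorem two_mul_norm_wronskian_le (f g : 𝕜 → A) (x : 𝕜) :
    2 * ‖wronskian f g x‖ ≤ ‖f x‖ ^ 2 + ‖g x‖ ^ 2 + (‖deriv f x‖ ^ 2 + ‖deriv g x‖ ^ 2) := by
  have triangle : ‖wronskian f g x‖ ≤ ‖f x‖ * ‖deriv g x‖ + ‖deriv f x‖ * ‖g x‖ :=
    (norm_sub_le _ _).trans (add_le_add (norm_mul_le _ _) (norm_mul_le _ _))
  linarith [two_mul_le_add_sq ‖f x‖ ‖deriv g x‖, two_mul_le_add_sq ‖deriv f x‖ ‖g x‖]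

theorem hasDerivAt_div_of_wronskian_eq_zero {f g : 𝕜 → 𝕜} {z : 𝕜} (hf : DifferentiableAt 𝕜 f z)
    (hg : DifferentiableAt 𝕜 g z) (hW : wronskian f g z = 0) (hz : f z ≠ 0) :
    HasDerivAt (fun z ↦ g z / f z) 0 z := by
  refine (hg.hasDerivAt.div hf.hasDerivAt hz).congr_deriv ?_
  rw [wronskian] at hW
  rw [show deriv g z * f z - g z * deriv f z = 0 by linear_combination hW, zero_div]

end Wronskian

section RCLike

variable {𝕜 : Type*} [RCLike 𝕜]

theorem IsSchrodingerSolution.wronskian_eq {A : Type*} [NormedCommRing A] [NormedAlgebra 𝕜 A]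
    {q f g : 𝕜 → A} (hf : IsSchrodingerSolution q f) (hg : IsSchrodingerSolution q g) (x y : 𝕜) :
    wronskian f g x = wronskian f g y :=
  is_const_of_deriv_eq_zero (fun z ↦ (hf.hasDerivAt_wronskian hg z).differentiableAt)
    (fun z ↦ (hf.hasDerivAt_wronskian hg z).deriv) x y

theorem exists_eqOn_const_mul_of_wronskian_eq_zero {f g : 𝕜 → 𝕜} {U : Set 𝕜}
    (hf : AnalyticOnNhd 𝕜 f U) (hg : AnalyticOnNhd 𝕜 g U) (hU : IsOpen U) (hU' : IsPreconnected U)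
    (hW : ∀ z ∈ U, wronskian f g z = 0) {z₀ : 𝕜} (hz₀ : z₀ ∈ U) (hfz₀ : f z₀ ≠ 0) :
    ∃ c, EqOn g (fun z ↦ c * f z) U := by
  refine ⟨g z₀ / f z₀, hg.eqOn_of_preconnected_of_eventuallyEq
    (analyticOnNhd_const.mul hf) hU' hz₀ ?_⟩
  obtain ⟨ε, hε, hball⟩ := Metric.eventually_nhds_iff_ball.mp
    ((hU.eventually_mem hz₀).and ((hf z₀ hz₀).continuousAt.eventually_ne hfz₀))
  have hderiv : ∀ z ∈ Metric.ball z₀ ε, HasDerivAt (fun z ↦ g z / f z) 0 z := fun z hz ↦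
    have hzU := (hball z hz).1
    hasDerivAt_div_of_wronskian_eq_zero (hf z hzU).differentiableAt (hg z hzU).differentiableAt
      (hW z hzU) (hball z hz).2
  filter_upwards [Metric.ball_mem_nhds z₀ hε] with z hz
  have hquot : g z / f z = g z₀ / f z₀ :=
    Metric.isOpen_ball.is_const_of_deriv_eq_zero Metric.isPreconnected_ball
      (fun w hw ↦ (hderiv w hw).differentiableAt.differentiableWithinAt)
      (fun w hw ↦ (hderiv w hw).deriv) hz (Metric.mem_ball_self hε)
  rw [← hquot, div_mul_cancel₀ _ (hball z hz).2]

end RCLike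

theorem tendsto_atTop_atTop_of_hasDerivAt_of_le {f f' : ℝ → ℝ} {c : ℝ} (hc : 0 < c)
    (hf : ∀ᶠ x in atTop, HasDerivAt f (f' x) x) (hf' : ∀ᶠ x in atTop, c ≤ f' x) :
    Tendsto f atTop atTop := by
  obtain ⟨R, hR⟩ := eventually_atTop.mp (hf.and hf')
  have lower : ∀ᶠ x in atTop, f R + c * (x - R) ≤ f x := by
    filter_upwards [eventually_ge_atTop R] with x hx
    have := (convex_Ici R).mul_sub_le_image_sub_of_le_deriv
      (HasDerivAt.continuousOn fun y hy ↦ (hR y hy).1)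
      (fun y hy ↦ (hR y (interior_subset hy)).1.differentiableAt.differentiableWithinAt)
      (fun y hy ↦ (hR y (interior_subset hy)).2.trans_eq
        (hR y (interior_subset hy)).1.deriv.symm)
      R self_mem_Ici x hx hx
    linarith
  refine tendsto_atTop_mono' _ lower (tendsto_atTop_add_const_left _ _ ?_)
  exact (tendsto_atTop_add_const_right _ (-R) tendsto_id).const_mul_atTop hc

section Decay

variable {q v w : ℝ → ℂ}

theorem IsSchrodingerSolution.hasDerivAt_two_mul_inner_deriv (hv : IsSchrodingerSolution q v)
    (r : ℝ) : HasDerivAt (fun r ↦ 2 * inner ℝ (v r) (deriv v r))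
      (2 * (‖deriv v r‖ ^ 2 + (q r).re * ‖v r‖ ^ 2)) r := by
  have inner_potential : inner ℝ (v r) (q r * v r) = (q r).re * ‖v r‖ ^ 2 := by
    rw [Complex.inner, mul_assoc, Complex.mul_conj, Complex.re_mul_ofReal,
      Complex.normSq_eq_norm_sq]
  refine (((hv.hasDerivAt r).inner ℝ (hv.hasDerivAt_deriv r)).const_mul 2).congr_deriv ?_
  rw [inner_potential, real_inner_self_eq_norm_sq, add_comm]

theorem IsSchrodingerSolution.wronskian_eq_zero_of_tendsto_zero
    (hv : IsSchrodingerSolution q v) (hw : IsSchrodingerSolution q w)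
    (hq : ∀ᶠ r in atTop, 0 ≤ (q r).re)
    (hv₀ : Tendsto v atTop (nhds 0)) (hw₀ : Tendsto w atTop (nhds 0)) (r : ℝ) :
    wronskian v w r = 0 := by
  by_contra hW
  replace hW : 0 < ‖wronskian v w r‖ := norm_pos_iff.mpr hW
  have energy_tendsto : Tendsto (fun r ↦ ‖v r‖ ^ 2 + ‖w r‖ ^ 2) atTop (nhds 0) := by
    simpa using (hv₀.norm.pow 2).add (hw₀.norm.pow 2)
  have energy_convex : ∀ᶠ s in atTop, 2 * ‖wronskian v w r‖ ≤
      2 * (‖deriv v s‖ ^ 2 + (q s).re * ‖v s‖ ^ 2) +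
        2 * (‖deriv w s‖ ^ 2 + (q s).re * ‖w s‖ ^ 2) := by
    filter_upwards [hq, energy_tendsto.eventually_le_const hW] with s hqs hs
    have hbound := two_mul_norm_wronskian_le v w s
    rw [hv.wronskian_eq hw s r] at hbound
    linarith [mul_nonneg hqs (sq_nonneg ‖v s‖), mul_nonneg hqs (sq_nonneg ‖w s‖)]
  have energy_deriv_tendsto := tendsto_atTop_atTop_of_hasDerivAt_of_le (by positivity)
    (.of_forall fun s ↦
      (hv.hasDerivAt_two_mul_inner_deriv s).add (hw.hasDerivAt_two_mul_inner_deriv s))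
    energy_convex
  have energy_tendsto_atTop := tendsto_atTop_atTop_of_hasDerivAt_of_le one_pos
    (.of_forall fun s ↦ (hv.hasDerivAt s).norm_sq.add (hw.hasDerivAt s).norm_sq)
    (energy_deriv_tendsto.eventually_ge_atTop 1)
  exact not_tendsto_nhds_of_tendsto_atTop energy_tendsto_atTop 0 energy_tendsto

end Decay

theorem hasDerivAt_comp_ofReal_mul {u : ℂ → ℂ} {u' e : ℂ} {r : ℝ} (hu : HasDerivAt u u' (r * e)) :
    HasDerivAt (fun r : ℝ ↦ u (r * e)) (e * u') r := by
  simpa [mul_comm] using (hu.comp (r : ℂ) ((hasDerivAt_id _).mul_const e)).comp_ofReal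

theorem deriv_comp_ofReal_mul {u : ℂ → ℂ} (hu : Differentiable ℂ u) (e : ℂ) :
    deriv (fun r : ℝ ↦ u (r * e)) = fun r : ℝ ↦ e * deriv u (r * e) :=
  funext fun _ ↦ (hasDerivAt_comp_ofReal_mul (hu _).hasDerivAt).deriv

theorem IsSchrodingerSolution.comp_ofReal_mul {Q u : ℂ → ℂ} (hu : IsSchrodingerSolution Q u)
    (e : ℂ) : IsSchrodingerSolution (fun r : ℝ ↦ e ^ 2 * Q (r * e)) (fun r : ℝ ↦ u (r * e)) where
  differentiable r := (hasDerivAt_comp_ofReal_mul (hu.hasDerivAt _)).differentiableAt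
  hasDerivAt_deriv r := by
    rw [deriv_comp_ofReal_mul hu.differentiable]
    refine ((hasDerivAt_comp_ofReal_mul (hu.hasDerivAt_deriv _)).const_mul e).congr_deriv ?_
    ring

theorem wronskian_comp_ofReal_mul {f g : ℂ → ℂ} (hf : Differentiable ℂ f)
    (hg : Differentiable ℂ g) (e : ℂ) (r : ℝ) :
    wronskian (fun r : ℝ ↦ f (r * e)) (fun r : ℝ ↦ g (r * e)) r = e * wronskian f g (r * e) := by
  simp only [wronskian, deriv_comp_ofReal_mul hf, deriv_comp_ofReal_mul hg]
  ring

theorem eventually_re_pos_of_isEquivalent_pow {Q : ℂ → ℂ} {c e : ℂ} {n : ℕ}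
    (hQ : Q ~[Bornology.cobounded ℂ] fun z ↦ c * z ^ n) (he : 0 < (c * e ^ (n + 2)).re) :
    ∀ᶠ r : ℝ in atTop, 0 < (e ^ 2 * Q (r * e)).re := by
  have he₀ : e ≠ 0 := by
    rintro rfl
    simp at he
  have ray_tendsto : Tendsto (fun r : ℝ ↦ (r : ℂ) * e) atTop (Bornology.cobounded ℂ) :=
    Tendsto.comp (map_mul_right_cobounded he₀).le (RCLike.tendsto_ofReal_atTop_cobounded ℂ)
  have scaled_isEquivalent : (fun r : ℝ ↦ e ^ 2 * Q (r * e) / (r : ℂ) ^ n) ~[atTop]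
      fun _ ↦ c * e ^ (n + 2) := by
    refine (((IsEquivalent.refl (u := fun _ ↦ e ^ 2)).mul (hQ.comp_tendsto ray_tendsto)).div
      (IsEquivalent.refl (u := fun r : ℝ ↦ (r : ℂ) ^ n))).congr_right ?_
    filter_upwards [eventually_gt_atTop 0] with r hr
    have hr₀ : (r : ℂ) ≠ 0 := Complex.ofReal_ne_zero.mpr hr.ne'
    simp only [Pi.mul_apply, Pi.div_apply, Function.comp_apply]
    field_simp
    ring
  have scaled_tendsto := (Complex.continuous_re.tendsto _).comp
    (scaled_isEquivalent.symm.tendsto_nhds tendsto_const_nhds)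
  filter_upwards [scaled_tendsto.eventually_const_lt he, eventually_gt_atTop 0] with r hpos hr
  rw [Function.comp_apply, ← Complex.ofReal_pow, Complex.div_ofReal_re] at hpos
  exact (div_pos_iff_of_pos_right (pow_pos hr n)).mp hpos

theorem stmt4_general {Q u₁ u₂ : ℂ → ℂ} {e : ℂ} (h₁ : IsSchrodingerSolution Q u₁)
    (h₂ : IsSchrodingerSolution Q u₂) (he : e ≠ 0)
    (hQ : ∀ᶠ r : ℝ in atTop, 0 ≤ (e ^ 2 * Q (r * e)).re)
    (ht₁ : Tendsto (fun r : ℝ ↦ u₁ (r * e)) atTop (nhds 0))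
    (ht₂ : Tendsto (fun r : ℝ ↦ u₂ (r * e)) atTop (nhds 0)) (hu₁ : u₁ ≠ 0) :
    ∃ c : ℂ, ∀ z : ℂ, u₂ z = c * u₁ z := by
  have ray_wronskian := (h₁.comp_ofReal_mul e).wronskian_eq_zero_of_tendsto_zero
    (h₂.comp_ofReal_mul e) hQ ht₁ ht₂ 0
  rw [wronskian_comp_ofReal_mul h₁.differentiable h₂.differentiable] at ray_wronskian
  have hW (z : ℂ) : wronskian u₁ u₂ z = 0 :=
    (h₁.wronskian_eq h₂ _ _).trans ((mul_eq_zero.mp ray_wronskian).resolve_left he)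
  obtain ⟨z₀, hz₀⟩ := Function.ne_iff.mp hu₁
  obtain ⟨c, hc⟩ := exists_eqOn_const_mul_of_wronskian_eq_zero
    (fun z _ ↦ h₁.differentiable.analyticAt z) (fun z _ ↦ h₂.differentiable.analyticAt z)
    isOpen_univ isPreconnected_univ (fun z _ ↦ hW z) (mem_univ z₀) hz₀
  exact ⟨c, fun z ↦ hc (mem_univ z)⟩

section Eigenfunction

variable {m : ℕ} {a : ℕ → ℂ} {lam : ℂ} {u : ℂ → ℂ}

/-- The potential `Q` for which `-u'' - ((iz)^m + P(iz)) u = lam u` reads `u'' = Q u`. -/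
noncomputable def potential (m : ℕ) (a : ℕ → ℂ) (lam z : ℂ) : ℂ :=
  -((Complex.I * z) ^ m + (Ppoly m a (Complex.I * z) + lam))

theorem Ppoly_isLittleO_pow : Ppoly m a =o[Bornology.cobounded ℂ] fun z : ℂ ↦ z ^ m :=
  IsLittleO.fun_sum fun _ hj ↦
    (isLittleO_pow_pow_cobounded_of_lt (by grind)).const_mul_left _

theorem potential_isEquivalent_pow (hm : 0 < m) :
    potential m a lam ~[Bornology.cobounded ℂ] fun z ↦ -Complex.I ^ m * z ^ m := by
  have lam_isLittleO : (fun _ : ℂ ↦ lam) =o[Bornology.cobounded ℂ] fun z : ℂ ↦ z ^ m := by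
    simpa using (isLittleO_pow_pow_cobounded_of_lt hm (R := ℂ)).const_mul_left lam
  have rotate_tendsto : Tendsto (Complex.I * ·) (Bornology.cobounded ℂ) (Bornology.cobounded ℂ) :=
    (map_mul_left_cobounded Complex.I_ne_zero).le
  have unrotated : (fun z ↦ z ^ m + (Ppoly m a z + lam)) ~[Bornology.cobounded ℂ]
      fun z ↦ z ^ m :=
    IsEquivalent.refl.add_isLittleO (Ppoly_isLittleO_pow.add lam_isLittleO)
  refine (unrotated.comp_tendsto rotate_tendsto).neg.congr_right (.of_forall fun z ↦ ?_)
  simp only [Function.comp_apply, mul_pow, neg_mul]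

/-- The direction of the ray `arg z = -π/2 + 2π/(m+2)`. -/
noncomputable def rayDirection (m : ℕ) : ℂ :=
  Complex.exp (((-(Real.pi / 2) + 2 * Real.pi / ((m : ℝ) + 2) : ℝ) : ℂ) * Complex.I)

theorem I_mul_rayDirection_pow : (Complex.I * rayDirection m) ^ (m + 2) = 1 := by
  have hI : Complex.I * rayDirection m = Complex.exp (2 * Real.pi * Complex.I / (m + 2 : ℕ)) := by
    nth_rewrite 1 [rayDirection, ← Complex.exp_pi_div_two_mul_I, ← Complex.exp_add]
    congr 1
    push_cast
    ring
  rw [hI, (Complex.isPrimitiveRoot_exp (m + 2) (by omega)).pow_eq_one]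

theorem eventually_re_potential_pos (hm : 0 < m) : ∀ᶠ r : ℝ in atTop,
    0 < (rayDirection m ^ 2 * potential m a lam (r * rayDirection m)).re := by
  refine eventually_re_pos_of_isEquivalent_pow (potential_isEquivalent_pow hm) ?_
  have leading : -Complex.I ^ m * rayDirection m ^ (m + 2) = 1 := by
    rw [← I_mul_rayDirection_pow (m := m), mul_pow, pow_add Complex.I, Complex.I_sq]
    ring
  rw [leading]
  exact one_pos

theorem IsEigenfunction.ne_zero (hu : IsEigenfunction m a lam u) : u ≠ 0 := fun h ↦
  hu.2.1 ⟨0, congrFun h⟩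

theorem IsEigenfunction.isSchrodingerSolution (hu : IsEigenfunction m a lam u) :
    IsSchrodingerSolution (potential m a lam) u := by
  obtain ⟨hdiff, -, hode, -⟩ := hu
  refine ⟨hdiff, fun z ↦ ?_⟩
  refine (hdiff.deriv z).hasDerivAt.congr_deriv ?_
  rw [potential]
  linear_combination -hode z

theorem IsEigenfunction.tendsto_rayDirection (hu : IsEigenfunction m a lam u) :
    Tendsto (fun r : ℝ ↦ u (r * rayDirection m)) atTop (nhds 0) :=
  hu.2.2.2.1

end Eigenfunction

/-- Every eigenvalue of `H(m,a)` has geometric multiplicity one. -/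
theorem stmt4 (m : ℕ) (hm : 3 ≤ m) (a : ℕ → ℂ) (lam : ℂ) (u₁ u₂ : ℂ → ℂ)
    (h₁ : IsEigenfunction m a lam u₁) (h₂ : IsEigenfunction m a lam u₂) :
    ∃ c : ℂ, ∀ z : ℂ, u₂ z = c * u₁ z :=
  stmt4_general h₁.isSchrodingerSolution h₂.isSchrodingerSolution (Complex.exp_ne_zero _)
    ((eventually_re_potential_pos (by omega)).mono fun _ ↦ le_of_lt)
    h₁.tendsto_rayDirection h₂.tendsto_rayDirection h₁.ne_zero
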